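/- Let n ≥ 3 and let u, v ∈ ℤ^{2n} be integer vectors with ω(u, v) ≥ 2 such that the additive subgroup of ℝ² generated by the 2n column vectors (u_k, v_k), k = 1, …, 2n, equals ℤ². Set a₁ = ω(u, v). Then there exists γ ∈ Sp(2n, ℤ) such that the vectors u' = γu, v' = γv satisfy: u'₁ = a₁, u'₂ = 0, v'₁ = 0, v'₂ = 1 (i.e. the first 2×2 block M₁ equals [[a₁, 0], [0, 1]]), and for each j = 2, …, n one has u'_{2j} = 0, v'_{2j−1} = 0, v'_{2j} = 0 and 0 < u'_{2j−1} < a₁ (i.e. M_j = [[a_j, 0], [0, 0]] with 0 < a_j < a₁). -/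

import Mathlib

def idx1 (n : ℕ) (j : Fin n) : Fin (2 * n) :=
  ⟨2 * j.val, by have := j.isLt; omega⟩

def idx2 (n : ℕ) (j : Fin n) : Fin (2 * n) :=
  ⟨2 * j.val + 1, by have := j.isLt; omega⟩

def omegaJ {R : Type*} [CommRing R] (n : ℕ) (j : Fin n) (u v : Fin (2 * n) → R) : R :=
  u (idx1 n j) * v (idx2 n j) - u (idx2 n j) * v (idx1 n j)

def omegaForm {R : Type*} [CommRing R] (n : ℕ) (u v : Fin (2 * n) → R) : R :=
  ∑ j : Fin n, omegaJ n j u v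

def IsSymplectic {R : Type*} [CommRing R] (n : ℕ)
    (g : Matrix (Fin (2 * n)) (Fin (2 * n)) R) : Prop :=
  ∀ x y : Fin (2 * n) → R, omegaForm n (g.mulVec x) (g.mulVec y) = omegaForm n x y

/-!
Everything rests on symplectic transvections: if `ω(x, y) = 1`, the transvection along `y - x` maps
`x` to `y` and fixes every `z` with `ω(x, z) = ω(y, z)`. Chaining two of them moves `x` to `y` as
soon as some `s` satisfies `ω(x, s) = ω(s, y) = 1`.

Fix two orthogonal hyperbolic pairs `(e, f)` and `(p, q)` of the standard basis. Rotating the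
plane of `(e, f)` makes `v` orthogonal to `e`, and then an intermediate vector `s` from `v` to `f`
exists. Once `v = f`, rotating the plane of `(p, q)`, which fixes `f`, makes `u` orthogonal to
`q`; this gives enough room for an intermediate vector `s` from `u` to `t` with
`ω(s, f) = ω(u, f)`, so that both transvections fix `f`. Here `t` is any vector with
`ω(e, t) = 0`, `ω(t, f) = ω(u, v)` and `ω(t, q) = 1`; the normal form takes all the entries `a_j`,
`j ≥ 2`, equal to `1`.
-/

open LinearMap (BilinForm)

lemma exists_isCoprime_mul_eq_mul {R : Type*} [CommRing R] [IsDomain R] [IsBezout R]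
    (x y : R) : ∃ a b : R, IsCoprime a b ∧ x * a = y * b := by
  obtain ⟨r, s, hgcd⟩ := IsBezout.gcd_eq_sum x y
  obtain ⟨x₀, hx⟩ := IsBezout.gcd_dvd_left x y
  obtain ⟨y₀, hy⟩ := IsBezout.gcd_dvd_right x y
  generalize IsBezout.gcd x y = g at hgcd hx hy
  by_cases hg : g = 0
  · exact ⟨1, 0, isCoprime_one_left, by simp [hx, hg]⟩
  · have hbezout : s * y₀ + r * x₀ = 1 :=
      mul_left_cancel₀ hg (by linear_combination hgcd - r * hx - s * hy)
    exact ⟨y₀, x₀, ⟨s, r, hbezout⟩, by rw [hx, hy]; ring⟩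

section AlternatingForm

variable {R M : Type*} [CommRing R] [AddCommGroup M] [Module R M] {B : BilinForm R M}

/-- The symplectic transvection `x ↦ x + c B(w, x) w`, as an isometry of the alternating
form `B`. -/
def transvectionIsometry (hB : B.IsAlt) (c : R) (w : M) : B →bᵢ B where
  __ := LinearMap.transvection (c • B w) w
  map_app' x y := by
    simp only [AddHom.toFun_eq_coe, LinearMap.coe_toAddHom, LinearMap.transvection.apply, map_add,
      map_smul, LinearMap.add_apply, LinearMap.smul_apply, smul_eq_mul, hB.self_eq_zero,
      ← hB.neg_eq w x]
    ring

lemma transvectionIsometry_apply (hB : B.IsAlt) (c : R) (w x : M) :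
    transvectionIsometry hB c w x = x + (c * B w x) • w :=
  rfl

lemma exists_isometry_map_eq_of_apply_eq_one (hB : B.IsAlt) {x y : M} (hxy : B x y = 1) :
    ∃ g : B →bᵢ B, g x = y ∧ ∀ z, B x z = B y z → g z = z := by
  refine ⟨transvectionIsometry hB (-1) (y - x), ?_, fun z hz => ?_⟩
  · simp [transvectionIsometry_apply, hB.self_eq_zero, ← hB.neg_eq x y, hxy]
  · simp [transvectionIsometry_apply, hz]

lemma exists_isometry_map_eq_of_intermediate (hB : B.IsAlt) {x s y : M} (hxs : B x s = 1)
    (hsy : B s y = 1) :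
    ∃ g : B →bᵢ B, g x = y ∧ ∀ z, B x z = B s z → B s z = B y z → g z = z := by
  obtain ⟨g, hgx, hg⟩ := exists_isometry_map_eq_of_apply_eq_one hB hxs
  obtain ⟨h, hhs, hh⟩ := exists_isometry_map_eq_of_apply_eq_one hB hsy
  refine ⟨h.comp g, by simp [hgx, hhs], fun z hxz hsz => ?_⟩
  simp [hg z hxz, hh z hsz]

/-- The isometry acting on the hyperbolic plane spanned by `p` and `q` through the matrix of
determinant one that sends `p` to `a p + b q` and `q` to `c p + d q`, and trivially on the
orthogonal complement of that plane. The formula comes from the component of `x` in the plane being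
`B(x, q) p + B(p, x) q = -B(q, x) p + B(p, x) q`. -/
def hyperbolicPlaneIsometry (hB : B.IsAlt) {p q : M} (hpq : B p q = 1) {a b c d : R}
    (hdet : a * d - b * c = 1) : B →bᵢ B where
  __ := LinearMap.id - (B q).smulRight ((a - 1) • p + b • q) +
    (B p).smulRight (c • p + (d - 1) • q)
  map_app' x y := by
    simp only [AddHom.toFun_eq_coe, LinearMap.coe_toAddHom, LinearMap.smulRight_apply,
      LinearMap.id_coe, id_eq, map_add, map_sub, map_smul, LinearMap.add_apply,
      LinearMap.sub_apply, LinearMap.smul_apply, smul_eq_mul, hB.self_eq_zero, hpq,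
      ← hB.neg_eq p q, ← hB.neg_eq p x, ← hB.neg_eq q x]
    linear_combination (B p x * B q y - B q x * B p y) * hdet

lemma hyperbolicPlaneIsometry_apply (hB : B.IsAlt) {p q : M} (hpq : B p q = 1) {a b c d : R}
    (hdet : a * d - b * c = 1) (x : M) :
    hyperbolicPlaneIsometry hB hpq hdet x =
      x - B q x • ((a - 1) • p + b • q) + B p x • (c • p + (d - 1) • q) :=
  rfl

lemma exists_isometry_apply_map_eq_zero [IsDomain R] [IsBezout R] (hB : B.IsAlt) {p q : M}
    (hpq : B p q = 1) (x : M) :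
    ∃ g : B →bᵢ B, B p (g x) = 0 ∧ ∀ z, B p z = 0 → B q z = 0 → g z = z := by
  obtain ⟨d, b, ⟨a, c, hdet⟩, hbd⟩ := exists_isCoprime_mul_eq_mul (B p x) (B q x)
  refine ⟨hyperbolicPlaneIsometry hB hpq (a := a) (b := b) (c := -c) (d := d)
    (by linear_combination hdet), ?_, fun z hpz hqz => ?_⟩
  · simp only [hyperbolicPlaneIsometry_apply, map_add, map_sub, map_smul, smul_eq_mul,
      hB.self_eq_zero, hpq]
    linear_combination hbd
  · simp [hyperbolicPlaneIsometry_apply, hpz, hqz]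

lemma exists_isometry_map_eq_of_hyperbolic [IsDomain R] [IsBezout R] (hB : B.IsAlt) {e f v s : M}
    (hef : B e f = 1) (hvs : B v s = 1) : ∃ g : B →bᵢ B, g v = f := by
  obtain ⟨g, heg, -⟩ := exists_isometry_apply_map_eq_zero hB hef v
  have hge : B (g v) e = 0 := hB.eq_iff.mp heg
  obtain ⟨h, hh, -⟩ := exists_isometry_map_eq_of_intermediate hB (x := g v) (y := f)
    (s := g s + (1 - B (g s) f) • e) (by simp [hvs, hge]) (by simp [hef])
  exact ⟨h.comp g, hh⟩

/-- The functionals `B u` and `B v` jointly surject onto `R²`. For the standard symplectic form this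
says that the columns of the pair `(u, v)` span `R²`. -/
def IsUnimodularPair (B : BilinForm R M) (u v : M) : Prop :=
  Function.Surjective ((B u).prod (B v))

namespace IsUnimodularPair

variable {u v : M}

lemma exists_apply_eq (h : IsUnimodularPair B u v) (x y : R) : ∃ s, B u s = x ∧ B v s = y := by
  obtain ⟨s, hs⟩ := h (x, y)
  exact ⟨s, congrArg Prod.fst hs, congrArg Prod.snd hs⟩

lemma map (h : IsUnimodularPair B u v) (g : B →bᵢ B) : IsUnimodularPair B (g u) (g v) := by
  rintro ⟨x, y⟩
  obtain ⟨s, hus, hvs⟩ := h.exists_apply_eq x y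
  exact ⟨g s, by simp [hus, hvs]⟩

end IsUnimodularPair

lemma exists_isometry_map_eq_and_fix_of_apply_eq_zero (hB : B.IsAlt) {e f q u t : M}
    (huf : IsUnimodularPair B u f) (hef : B e f = 1) (hqf : B q f = 0) (hqu : B q u = 0)
    (het : B e t = 0) (htf : B t f = B u f) (htq : B t q = 1) :
    ∃ g : B →bᵢ B, g u = t ∧ g f = f := by
  obtain ⟨r, hur, hfr⟩ := huf.exists_apply_eq 1 0
  have hrf : B r f = 0 := hB.eq_iff.mp hfr
  have huq : B u q = 0 := hB.eq_iff.mp hqu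
  have hqt : B q t = -1 := by rw [← hB.neg_eq, htq]
  have hft : B f t = -B u f := by rw [← hB.neg_eq, htf]
  -- The coefficient of `e` comes from `hsf`, then that of `f` from `hus`, that of `q` from `hst`.
  let s : M := r + B u f • e + (B r t + B u f * B u e - 1) • q - B u e • f
  have hus : B u s = 1 := by
    simp only [s, map_add, map_sub, map_smul, smul_eq_mul, hur, huq]
    ring
  have hsf : B s f = B u f := by simp [s, hrf, hef, hqf, hB.self_eq_zero]
  have hst : B s t = 1 := by
    simp only [s, map_add, map_sub, map_smul, LinearMap.add_apply, LinearMap.sub_apply,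
      LinearMap.smul_apply, smul_eq_mul, het, hqt, hft]
    ring
  obtain ⟨g, hgu, hg⟩ := exists_isometry_map_eq_of_intermediate hB hus hst
  exact ⟨g, hgu, hg f hsf.symm (hsf.trans htf.symm)⟩

theorem exists_isometry_map_eq_of_isUnimodularPair [IsDomain R] [IsBezout R] (hB : B.IsAlt)
    {e f p q u v t : M} (huv : IsUnimodularPair B u v) (hef : B e f = 1) (hpq : B p q = 1)
    (hpf : B p f = 0) (hqf : B q f = 0) (het : B e t = 0) (htf : B t f = B u v)
    (htq : B t q = 1) :
    ∃ g : B →bᵢ B, g u = t ∧ g v = f := by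
  obtain ⟨s, -, hvs⟩ := huv.exists_apply_eq 0 1
  obtain ⟨g, hgv⟩ := exists_isometry_map_eq_of_hyperbolic hB hef hvs
  obtain ⟨h, hqh, hh⟩ := exists_isometry_apply_map_eq_zero hB (p := q) (q := -p)
    (by rw [map_neg, hB.neg_eq, hpq]) (g u)
  have hhf : h f = f := hh f hqf (by simp [hpf])
  have hgvf : h.comp g v = f := by simp [hgv, hhf]
  obtain ⟨k, hku, hkf⟩ := exists_isometry_map_eq_and_fix_of_apply_eq_zero hB
    (hgvf ▸ huv.map (h.comp g)) hef hqf hqh het (by rw [htf, ← hgvf]; simp) htq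
  exact ⟨k.comp (h.comp g), hku, by simp [hgv, hhf, hkf]⟩

end AlternatingForm

section StandardForm

variable {R : Type*} [CommRing R] {n : ℕ}

lemma idx1_injective : Function.Injective (idx1 n) := fun i j h => by
  simpa [idx1, Fin.ext_iff] using h

lemma idx2_injective : Function.Injective (idx2 n) := fun i j h => by
  simpa [idx2, Fin.ext_iff] using h

lemma idx1_ne_idx2 (i j : Fin n) : idx1 n i ≠ idx2 n j := by
  simp only [idx1, idx2, ne_eq, Fin.ext_iff]
  omega

lemma exists_eq_idx1_or_eq_idx2 (k : Fin (2 * n)) : ∃ j, k = idx1 n j ∨ k = idx2 n j :=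
  ⟨⟨k / 2, by omega⟩, by simp only [idx1, idx2, Fin.ext_iff]; omega⟩

variable (R n) in
/-- The standard symplectic form `omegaForm` as a bilinear form. -/
def omegaBilinForm : BilinForm R (Fin (2 * n) → R) :=
  ∑ j, (LinearMap.mul R R).compl₁₂ (LinearMap.proj (idx1 n j)) (LinearMap.proj (idx2 n j)) -
    ∑ j, (LinearMap.mul R R).compl₁₂ (LinearMap.proj (idx2 n j)) (LinearMap.proj (idx1 n j))

lemma omegaBilinForm_apply (x y : Fin (2 * n) → R) :
    omegaBilinForm R n x y = omegaForm n x y := by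
  simp [omegaBilinForm, omegaForm, omegaJ]

lemma omegaBilinForm_isAlt : (omegaBilinForm R n).IsAlt := fun x => by
  simp [omegaBilinForm_apply, omegaForm, omegaJ, mul_comm]

lemma omegaBilinForm_single_idx1_left (j : Fin n) (x : Fin (2 * n) → R) :
    omegaBilinForm R n (Pi.single (idx1 n j) 1) x = x (idx2 n j) := by
  simp [omegaBilinForm_apply, omegaForm, omegaJ, Pi.single_apply, idx1_injective.eq_iff,
    (idx1_ne_idx2 _ _).symm]

lemma omegaBilinForm_single_idx2_right (j : Fin n) (x : Fin (2 * n) → R) :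
    omegaBilinForm R n x (Pi.single (idx2 n j) 1) = x (idx1 n j) := by
  simp [omegaBilinForm_apply, omegaForm, omegaJ, Pi.single_apply, idx2_injective.eq_iff,
    idx1_ne_idx2]

lemma exists_forall_omegaBilinForm_eq_apply (k : Fin (2 * n)) :
    ∃ s, ∀ x : Fin (2 * n) → R, omegaBilinForm R n x s = x k := by
  obtain ⟨j, rfl | rfl⟩ := exists_eq_idx1_or_eq_idx2 k
  · exact ⟨Pi.single (idx2 n j) 1, omegaBilinForm_single_idx2_right j⟩
  · refine ⟨-Pi.single (idx1 n j) 1, fun x => ?_⟩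
    rw [map_neg, omegaBilinForm_isAlt.neg_eq, omegaBilinForm_single_idx1_left]

lemma isUnimodularPair_of_span_columns_eq_top {u v : Fin (2 * n) → R}
    (hspan : Submodule.span R (Set.range fun k => (u k, v k)) = ⊤) :
    IsUnimodularPair (omegaBilinForm R n) u v := by
  refine LinearMap.range_eq_top.mp (top_unique (hspan ▸ Submodule.span_le.mpr ?_))
  rintro _ ⟨k, rfl⟩
  obtain ⟨s, hs⟩ := exists_forall_omegaBilinForm_eq_apply (R := R) k
  exact ⟨s, by simp [hs]⟩

lemma isSymplectic_toMatrix' (g : omegaBilinForm R n →bᵢ omegaBilinForm R n) :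
    IsSymplectic n (LinearMap.toMatrix' g.toLinearMap) := fun x y => by
  simp [LinearMap.toMatrix'_mulVec, ← omegaBilinForm_apply]

lemma extend_idx1_apply_idx1 (c : Fin n → R) (j : Fin n) :
    Function.extend (idx1 n) c 0 (idx1 n j) = c j :=
  idx1_injective.extend_apply c 0 j

lemma extend_idx1_apply_idx2 (c : Fin n → R) (j : Fin n) :
    Function.extend (idx1 n) c 0 (idx2 n j) = 0 :=
  Function.extend_apply' _ _ _ fun ⟨i, hi⟩ => idx1_ne_idx2 i j hi

theorem exists_isSymplectic_mulVec_eq_extend_idx1 [IsDomain R] [IsBezout R]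
    {u v : Fin (2 * n) → R} (hspan : Submodule.span R (Set.range fun k => (u k, v k)) = ⊤)
    {i j : Fin n} (hij : i ≠ j) {c : Fin n → R} (hi : c i = omegaForm n u v) (hj : c j = 1) :
    ∃ γ : Matrix (Fin (2 * n)) (Fin (2 * n)) R, IsSymplectic n γ ∧
      γ.mulVec u = Function.extend (idx1 n) c 0 ∧ γ.mulVec v = Pi.single (idx2 n i) 1 := by
  obtain ⟨g, hgu, hgv⟩ := exists_isometry_map_eq_of_isUnimodularPair omegaBilinForm_isAlt
    (e := Pi.single (idx1 n i) 1) (f := Pi.single (idx2 n i) 1)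
    (p := Pi.single (idx1 n j) 1) (q := Pi.single (idx2 n j) 1)
    (t := Function.extend (idx1 n) c 0) (isUnimodularPair_of_span_columns_eq_top hspan)
    (by simp [omegaBilinForm_single_idx1_left]) (by simp [omegaBilinForm_single_idx1_left])
    (by simp [omegaBilinForm_single_idx1_left, idx2_injective.eq_iff, hij.symm])
    (by simp [omegaBilinForm_single_idx2_right, idx1_ne_idx2])
    (by rw [omegaBilinForm_single_idx1_left, extend_idx1_apply_idx2])
    (by rw [omegaBilinForm_single_idx2_right, extend_idx1_apply_idx1, hi, omegaBilinForm_apply])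
    (by rw [omegaBilinForm_single_idx2_right, extend_idx1_apply_idx1, hj])
  exact ⟨LinearMap.toMatrix' g.toLinearMap, isSymplectic_toMatrix' g,
    by simp [LinearMap.toMatrix'_mulVec, hgu], by simp [LinearMap.toMatrix'_mulVec, hgv]⟩

end StandardForm

theorem normalize_blocks_strict_general {R : Type*} [CommRing R] [LinearOrder R]
    [IsStrictOrderedRing R] [IsBezout R] (n : ℕ) (hn : 2 ≤ n)
    (u v : Fin (2 * n) → R) (hpos : 1 < omegaForm n u v)
    (hspan : Submodule.span R (Set.range fun k : Fin (2 * n) => (u k, v k)) = ⊤) :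
    ∃ γ : Matrix (Fin (2 * n)) (Fin (2 * n)) R,
      IsSymplectic n γ ∧
      γ.mulVec u (idx1 n (⟨0, by omega⟩ : Fin n)) = omegaForm n u v ∧
      γ.mulVec u (idx2 n (⟨0, by omega⟩ : Fin n)) = 0 ∧
      γ.mulVec v (idx1 n (⟨0, by omega⟩ : Fin n)) = 0 ∧
      γ.mulVec v (idx2 n (⟨0, by omega⟩ : Fin n)) = 1 ∧
      ∀ j : Fin n, 1 ≤ j.val →
        γ.mulVec u (idx2 n j) = 0 ∧
        γ.mulVec v (idx1 n j) = 0 ∧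
        γ.mulVec v (idx2 n j) = 0 ∧
        0 < γ.mulVec u (idx1 n j) ∧
        γ.mulVec u (idx1 n j) < omegaForm n u v := by
  let first : Fin n := ⟨0, by omega⟩
  let second : Fin n := ⟨1, by omega⟩
  have hne : first ≠ second := by simp [first, second]
  obtain ⟨γ, hγ, hu, hv⟩ := exists_isSymplectic_mulVec_eq_extend_idx1 hspan hne
    (c := Function.update 1 first (omegaForm n u v)) (by simp) (by simp [hne.symm])
  refine ⟨γ, hγ, ?_⟩
  rw [hu, hv]
  simp only [extend_idx1_apply_idx1, extend_idx1_apply_idx2]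
  refine ⟨by simp [first], trivial, by simp [idx1_ne_idx2], by simp [first], fun j hj => ?_⟩
  have hj_ne : j ≠ first := by
    rintro rfl
    simp [first] at hj
  simp [hj_ne, idx1_ne_idx2, idx2_injective.eq_iff, hpos]

/-- For `n ≥ 3` and integer vectors `u, v ∈ ℤ^{2n}` with
`a₁ = ω(u, v) ≥ 2` whose columns `(u_k, v_k)` generate `ℤ²`, there is
`γ ∈ Sp(2n, ℤ)` such that for `u' = γu, v' = γv`: the first block `M₁` equals
`[[a₁, 0], [0, 1]]` and for each `j ≥ 2` the `j`-th block is `[[a_j, 0], [0, 0]]`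
with `0 < a_j < a₁`. -/
theorem normalize_blocks_strict (n : ℕ) (hn : 3 ≤ n)
    (u v : Fin (2 * n) → ℤ) (hpos : 2 ≤ omegaForm n u v)
    (hgen : AddSubgroup.closure
      (Set.range fun k : Fin (2 * n) => ((u k, v k) : ℤ × ℤ)) = ⊤) :
    ∃ γ : Matrix (Fin (2 * n)) (Fin (2 * n)) ℤ,
      IsSymplectic n γ ∧
      γ.mulVec u (idx1 n (⟨0, by omega⟩ : Fin n)) = omegaForm n u v ∧
      γ.mulVec u (idx2 n (⟨0, by omega⟩ : Fin n)) = 0 ∧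
      γ.mulVec v (idx1 n (⟨0, by omega⟩ : Fin n)) = 0 ∧
      γ.mulVec v (idx2 n (⟨0, by omega⟩ : Fin n)) = 1 ∧
      ∀ j : Fin n, 1 ≤ j.val →
        γ.mulVec u (idx2 n j) = 0 ∧
        γ.mulVec v (idx1 n j) = 0 ∧
        γ.mulVec v (idx2 n j) = 0 ∧
        0 < γ.mulVec u (idx1 n j) ∧
        γ.mulVec u (idx1 n j) < omegaForm n u v :=
  normalize_blocks_strict_general n (by omega) u v (by omega) <|
    Submodule.toAddSubgroup_injective (by rw [Submodule.span_int_eq_addSubgroupClosure, hgen]; rfl)
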